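/- Let 1 ≤ α ≤ 2 and let X₁, …, X_B be random vectors in ℝ^d forming a martingale difference sequence, i.e., E[X_i | X_{i−1}, …, X₁] = 0 for all 1 < i ≤ B and E[X₁] = 0, and suppose E[‖X_i‖₂^α | X_{i−1}, …, X₁] ≤ σ^α almost surely for every i and some σ ≥ 0. Then E[ ‖(1/B) Σ_{i=1}^B X_i‖₂^α ] ≤ 2σ^α / B^{α−1}. -/

import Mathlib

/-!
For `1 ≤ a ≤ 2` and vectors `x`, `y` of a real inner product space,
`‖x + y‖ ^ a ≤ ‖x‖ ^ a + a * ⟪‖x‖ ^ (a - 2) • x, y⟫ + 2 * ‖y‖ ^ a` (lemma `key`). This follows by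
writing `‖x + y‖ ^ a = (‖x + y‖ ^ 2) ^ (a / 2)` and bounding the concave function `t ^ (a / 2)` by a
tangent line.

Taking for `x` the partial sum of the `X j`, `j < i`, and `y = X i`, the linear term has integral
zero, because `‖x‖ ^ (a - 2) • x` is measurable with respect to the past and `X i` has vanishing
conditional expectation (lemma `integral_inner_eq_zero`). So each step increases the `a`-th moment
of the partial sum by at most `2 * σ ^ a`. After `B` steps the moment is at most `2 * B * σ ^ a`, and
the factor `1 / B` contributes `B ^ (-a)`.
-/

open MeasureTheory

/-- The σ-algebra generated by `X j` for `j < i` (the "past" of the sequence at time `i`). -/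
def pastSigma {Ω E : Type*} [MeasurableSpace E] {B : ℕ} (X : Fin B → Ω → E) (i : Fin B) :
    MeasurableSpace Ω :=
  ⨆ j : Fin B, ⨆ _ : (j : ℕ) < (i : ℕ), MeasurableSpace.comap (X j) inferInstance

/-- The concave function `t ↦ t ^ β` lies below its tangent line at `C`. -/
lemma tangent {A C β : ℝ} (hA : 0 ≤ A) (hC : 0 < C) (h0 : 0 ≤ β) (h1 : β ≤ 1) :
    A ^ β ≤ C ^ β + β * C ^ (β - 1) * (A - C) := by
  have h := rpow_one_add_le_one_add_mul_self (s := A / C - 1) (by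
    have := div_nonneg hA hC.le; linarith) h0 h1
  rw [add_sub_cancel, Real.div_rpow hA hC.le, div_le_iff₀ (by positivity)] at h
  rw [Real.rpow_sub_one hC.ne']
  refine h.trans (le_of_eq ?_)
  field_simp

/-- Young's inequality with exponents `a / (a - 1)` and `a`, valid also at `a = 1`. -/
lemma young {s t a : ℝ} (hs : 0 ≤ s) (ht : 0 ≤ t) (h1 : 1 ≤ a) :
    a * (s ^ (a - 1) * t) ≤ (a - 1) * s ^ a + t ^ a := by
  have h := Real.geom_mean_le_arith_mean2_weighted (w₁ := (a - 1) / a) (w₂ := 1 / a)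
    (p₁ := s ^ a) (p₂ := t ^ a) (by apply div_nonneg <;> linarith) (by positivity) (by positivity)
    (by positivity) (by field_simp; ring)
  rw [← Real.rpow_mul hs, ← Real.rpow_mul ht, mul_div_cancel₀ _ (by positivity),
    mul_div_cancel₀ _ (by positivity), Real.rpow_one] at h
  calc _ ≤ a * ((a - 1) / a * s ^ a + 1 / a * t ^ a) := by gcongr
    _ = _ := by field_simp

/-- First-order expansion of `‖·‖ ^ a` with remainder `2 * ‖y‖ ^ a`. The linear term vanishes
in the case `x = 0`, whatever the value of `0 ^ (a - 2)`. -/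
lemma key {E : Type*} [NormedAddCommGroup E] [InnerProductSpace ℝ E] (x y : E) {a : ℝ}
    (h1 : 1 ≤ a) (h2 : a ≤ 2) :
    ‖x + y‖ ^ a ≤ ‖x‖ ^ a + a * inner ℝ (‖x‖ ^ (a - 2) • x) y + 2 * ‖y‖ ^ a := by
  rcases eq_or_ne x 0 with rfl | hx
  · have : 0 ≤ ‖y‖ ^ a := by positivity
    simp [Real.zero_rpow (by linarith : a ≠ 0)]
    linarith
  have hs : 0 < ‖x‖ := norm_pos_iff.2 hx
  have hxy : ‖x + y‖ ^ a = (‖x + y‖ ^ 2) ^ (a / 2) := by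
    rw [← Real.rpow_natCast_mul (by positivity)]; congr 1; push_cast; ring
  have hsq := norm_add_sq_real x y
  have hc := neg_le_of_abs_le (abs_real_inner_le_norm x y)
  rw [real_inner_smul_left]
  have ht : 0 ≤ ‖y‖ := norm_nonneg y
  generalize ‖x‖ = s at *
  generalize ‖y‖ = t at *
  generalize inner ℝ x y = c at *
  have hpow : ∀ u : ℝ, 0 < u → (u ^ 2) ^ (a / 2) = u ^ a ∧ (u ^ 2) ^ (a / 2 - 1) = u ^ (a - 2) := by
    intro u hu
    constructor <;> rw [← Real.rpow_natCast_mul hu.le] <;> congr 1 <;> push_cast <;> ring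
  -- For `t ≤ 2 * s` the tangent at `s ^ 2` suffices. For `t > 2 * s` its quadratic error is too
  -- large, and the tangent is taken at `(t - s) ^ 2`, the smallest possible value of `‖x + y‖ ^ 2`.
  rcases le_or_gt t (2 * s) with hts | hts
  · have h := tangent (A := ‖x + y‖ ^ 2) (C := s ^ 2) (β := a / 2) (by positivity) (by positivity)
      (by linarith) (by linarith)
    rw [← hxy, (hpow s hs).1, (hpow s hs).2, hsq] at h
    have hq : a / 2 * s ^ (a - 2) * t ^ 2 ≤ 2 * t ^ a := by
      rcases ht.eq_or_lt with rfl | ht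
      · simp [Real.zero_rpow (by linarith : a ≠ 0)]
      have e1 : s ^ (a - 2) ≤ (t / 2) ^ (a - 2) :=
        Real.rpow_le_rpow_of_nonpos (by positivity) (by linarith) (by linarith)
      have e2 : (t / 2) ^ (a - 2) * t ^ 2 ≤ 2 * t ^ a := by
        rw [Real.div_rpow ht.le zero_le_two, Real.rpow_sub ht, Real.rpow_two]
        have : (2:ℝ) ^ (-1 : ℝ) ≤ 2 ^ (a - 2) :=
          Real.rpow_le_rpow_of_exponent_le one_le_two (by linarith)
        rw [Real.rpow_neg_one] at this
        rw [div_mul_eq_mul_div, div_mul_cancel₀ _ (by positivity), div_le_iff₀ (by positivity)]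
        nlinarith [Real.rpow_pos_of_pos ht a]
      calc _ ≤ 1 * (t / 2) ^ (a - 2) * t ^ 2 := by gcongr; linarith
        _ ≤ _ := by linarith
    linarith
  · have hd : 0 < t - s := by linarith
    have h := tangent (A := ‖x + y‖ ^ 2) (C := (t - s) ^ 2) (β := a / 2) (by positivity)
      (by positivity) (by linarith) (by linarith)
    rw [← hxy, (hpow _ hd).1, (hpow _ hd).2, hsq] at h
    -- The slope may be increased, since it multiplies `c + s * t ≥ 0`.
    have e1 : (t - s) ^ (a - 2) ≤ s ^ (a - 2) :=
      Real.rpow_le_rpow_of_nonpos hs (by linarith) (by linarith)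
    have e2 : (t - s) ^ a ≤ t ^ a := by gcongr; linarith
    have e3 := young hs.le ht h1
    have e4 : s ^ (a - 1) = s ^ (a - 2) * s := by
      rw [← Real.rpow_add_one hs.ne']; congr 1; ring
    have e5 : a * (t - s) ^ (a - 2) * (c + s * t) ≤ a * s ^ (a - 2) * (c + s * t) := by
      gcongr; linarith
    have e6 : (a - 1) * s ^ a ≤ 1 * s ^ a := by gcongr; linarith
    rw [e4] at e3
    linarith

/-- The pull-out property of conditional expectation for the inner product. Only integrability of
the pairing is needed, so no second moments enter. -/
lemma integral_inner_eq_zero {Ω E : Type*} {m mΩ : MeasurableSpace Ω} {P : Measure Ω}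
    [IsFiniteMeasure P] [NormedAddCommGroup E] [InnerProductSpace ℝ E] [CompleteSpace E]
    (hm : m ≤ mΩ) {V Y : Ω → E} (hV : StronglyMeasurable[m] V) (hY : Integrable Y P)
    (hVY : Integrable (fun ω => inner ℝ (V ω) (Y ω)) P) (h0 : P[Y|m] =ᵐ[P] 0) :
    ∫ ω, inner ℝ (V ω) (Y ω) ∂P = 0 := by
  have h := condExp_bilin_of_stronglyMeasurable_left (innerSL ℝ) hV hVY hY
  have h2 := integral_condExp (μ := P) hm (f := fun ω => inner ℝ (V ω) (Y ω))
  rw [← h2]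
  apply integral_eq_zero_of_ae
  filter_upwards [h, h0] with ω e e0
  refine e.trans ?_
  rw [e0]
  simp

/-- One step of the moment recursion, for a single increment `Y` with respect to a σ-algebra `m`. -/
lemma moment_step {Ω E : Type*} {m mΩ : MeasurableSpace Ω} {P : Measure Ω}
    [IsProbabilityMeasure P] [NormedAddCommGroup E] [InnerProductSpace ℝ E] [CompleteSpace E]
    (hm : m ≤ mΩ) {S Y : Ω → E} {a c : ℝ} (h1 : 1 ≤ a) (h2 : a ≤ 2)
    (hS : StronglyMeasurable[m] S) (hSa : Integrable (fun ω => ‖S ω‖ ^ a) P)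
    (hY : Integrable Y P) (hYa : Integrable (fun ω => ‖Y ω‖ ^ a) P)
    (hSYa : Integrable (fun ω => ‖S ω + Y ω‖ ^ a) P) (h0 : P[Y|m] =ᵐ[P] 0)
    (hc : ∀ᵐ ω ∂P, (P[fun ω => ‖Y ω‖ ^ a|m]) ω ≤ c) :
    ∫ ω, ‖S ω + Y ω‖ ^ a ∂P ≤ ∫ ω, ‖S ω‖ ^ a ∂P + 2 * c := by
  have hV : StronglyMeasurable[m] (fun ω => ‖S ω‖ ^ (a - 2) • S ω) :=
    (hS.norm.measurable.pow_const _).stronglyMeasurable.smul hS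
  have hVY : Integrable (fun ω => inner ℝ (‖S ω‖ ^ (a - 2) • S ω) (Y ω)) P := by
    refine (hSa.add hYa).mono' ((hV.mono hm).aestronglyMeasurable.inner hY.1) (ae_of_all _ ?_)
    intro ω
    refine (norm_inner_le_norm _ _).trans ?_
    rw [norm_smul, Real.norm_of_nonneg (by positivity)]
    rcases eq_or_ne (S ω) 0 with hs | hs
    · simp only [hs, norm_zero, mul_zero, zero_mul, Pi.add_apply]
      positivity
    · have hs' : 0 < ‖S ω‖ := norm_pos_iff.2 hs
      have e : ‖S ω‖ ^ (a - 2) * ‖S ω‖ = ‖S ω‖ ^ (a - 1) := by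
        rw [← Real.rpow_add_one hs'.ne']; congr 1; ring
      have hy := young hs'.le (norm_nonneg (Y ω)) h1
      have p1 : 0 ≤ ‖S ω‖ ^ (a - 1) * ‖Y ω‖ := by positivity
      have p2 : 0 ≤ ‖S ω‖ ^ a := by positivity
      rw [e, Pi.add_apply]
      nlinarith
  have hz := integral_inner_eq_zero hm hV hY hVY h0
  have hYc : ∫ ω, ‖Y ω‖ ^ a ∂P ≤ c := by
    rw [← integral_condExp hm]
    simpa using integral_mono_ae integrable_condExp (integrable_const c) hc
  have hI : Integrable
      (fun ω => ‖S ω‖ ^ a + a * inner ℝ (‖S ω‖ ^ (a - 2) • S ω) (Y ω)) P :=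
    hSa.add (hVY.const_mul a)
  calc ∫ ω, ‖S ω + Y ω‖ ^ a ∂P
      ≤ ∫ ω, (‖S ω‖ ^ a + a * inner ℝ (‖S ω‖ ^ (a - 2) • S ω) (Y ω) + 2 * ‖Y ω‖ ^ a) ∂P :=
        integral_mono hSYa (hI.add (hYa.const_mul 2))
          fun ω => key _ _ h1 h2
    _ = ∫ ω, ‖S ω‖ ^ a ∂P + 2 * ∫ ω, ‖Y ω‖ ^ a ∂P := by
        rw [integral_add hI (hYa.const_mul 2),
          integral_add hSa (hVY.const_mul a), integral_const_mul, integral_const_mul, hz]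
        simp
    _ ≤ _ := by linarith

/-- batching lemma, vector case. Let `X₁, …, X_B` be an `ℝ^d`-valued
martingale difference sequence with conditional `α`-th moments of the Euclidean norm bounded
by `σ^α` (`1 ≤ α ≤ 2`). Then `E[‖B⁻¹ Σᵢ Xᵢ‖₂^α] ≤ 2 σ^α / B^{α−1}`. -/
theorem statement8
    {Ω : Type*} [MeasurableSpace Ω] (P : Measure Ω) [IsProbabilityMeasure P]
    (d B : ℕ) (hB : 1 ≤ B) (X : Fin B → Ω → EuclideanSpace ℝ (Fin d)) (α σ : ℝ)
    (hα : α ∈ Set.Icc (1 : ℝ) 2) (hσ : 0 ≤ σ)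
    (hmeas : ∀ i, Measurable (X i))
    (hint : ∀ i, Integrable (X i) P)
    (hintα : ∀ i, Integrable (fun ω => ‖X i ω‖ ^ α) P)
    (hmds : ∀ i : Fin B, P[X i|pastSigma X i] =ᵐ[P] 0)
    (hmom : ∀ i : Fin B, ∀ᵐ ω ∂P, (P[fun ω => ‖X i ω‖ ^ α|pastSigma X i]) ω ≤ σ ^ α) :
    ∫ ω, ‖(1 / (B : ℝ)) • ∑ i, X i ω‖ ^ α ∂P ≤ 2 * σ ^ α / (B : ℝ) ^ (α - 1) := by
  obtain ⟨h1, h2⟩ := hα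
  have ha0 : ENNReal.ofReal α ≠ 0 := by
    rw [Ne, ENNReal.ofReal_eq_zero]; linarith
  have haR : (ENNReal.ofReal α).toReal = α := ENNReal.toReal_ofReal (by linarith)
  have hLp : ∀ i, MemLp (X i) (ENNReal.ofReal α) P := fun i => by
    rw [← integrable_norm_rpow_iff (hint i).1 ha0 ENNReal.ofReal_ne_top, haR]
    exact hintα i
  have hsumInt : ∀ s : Finset (Fin B), Integrable (fun ω => ‖∑ i ∈ s, X i ω‖ ^ α) P := fun s => by
    have h := (memLp_finsetSum s fun i _ => hLp i).integrable_norm_rpow ha0 ENNReal.ofReal_ne_top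
    rwa [haR] at h
  have hpast : ∀ i, pastSigma X i ≤ ‹MeasurableSpace Ω› := fun i =>
    iSup₂_le fun j _ => (hmeas j).comap_le
  have hind : ∀ k : ℕ, k ≤ B →
      ∫ ω, ‖∑ i with i.val < k, X i ω‖ ^ α ∂P ≤ 2 * k * σ ^ α := by
    intro k
    induction k with
    | zero => intro _; simp [Real.zero_rpow (by linarith : α ≠ 0)]
    | succ k ih =>
      intro hk
      set n : Fin B := ⟨k, hk⟩ with hn
      have hfilter : (Finset.univ.filter fun i : Fin B => i.val < k + 1) =
          insert n (Finset.univ.filter fun i : Fin B => i.val < k) := by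
        ext i
        simp only [Finset.mem_filter, Finset.mem_univ, true_and, Finset.mem_insert, Fin.ext_iff, hn]
        omega
      have hsplit : ∀ ω, ∑ i with i.val < k + 1, X i ω = (∑ i with i.val < k, X i ω) + X n ω := by
        intro ω
        rw [hfilter, Finset.sum_insert (by simp [hn]), add_comm]
      have hSm : StronglyMeasurable[pastSigma X n] (fun ω => ∑ i with i.val < k, X i ω) := by
        refine Finset.stronglyMeasurable_fun_sum _ fun j hj => ?_
        have hj' : j.val < n.val := (Finset.mem_filter.1 hj).2
        have hle : MeasurableSpace.comap (X j) inferInstance ≤ pastSigma X n :=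
          le_iSup₂_of_le j hj' le_rfl
        exact ((comap_measurable (X j)).mono hle le_rfl).stronglyMeasurable
      have hstep := moment_step (hpast n) h1 h2 hSm (hsumInt _) (hint n) (hintα n)
        (by simpa only [hsplit] using hsumInt (Finset.univ.filter fun i : Fin B => i.val < k + 1))
        (hmds n) (hmom n)
      simp only [hsplit]
      have := ih (by omega)
      push_cast
      linarith
  have hfin := hind B le_rfl
  simp only [Fin.is_lt, Finset.filter_true] at hfin
  have hB0 : (0 : ℝ) < B := by exact_mod_cast hB
  have hscale : ∀ ω, ‖(1 / (B : ℝ)) • ∑ i, X i ω‖ ^ α = ((B : ℝ) ^ α)⁻¹ * ‖∑ i, X i ω‖ ^ α := by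
    intro ω
    rw [norm_smul, Real.mul_rpow (norm_nonneg _) (norm_nonneg _),
      Real.norm_of_nonneg (by positivity), one_div, Real.inv_rpow hB0.le]
  simp only [hscale]
  rw [integral_const_mul, Real.rpow_sub_one hB0.ne']
  calc _ ≤ ((B : ℝ) ^ α)⁻¹ * (2 * B * σ ^ α) := by gcongr
    _ = _ := by field_simp
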